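/- Let A be a unital C*-algebra, M a Hilbert C*-module over A, and w ∈ M. For c ∈ A write |c|_A = (c*c)^{1/2}. Then |w|_M = ⟨w,w⟩^{1/2} is the supremum in the order of A of the set { |⟨v, w⟩|_A : v ∈ M, ‖v‖_M ≤ 1 }; that is: (i) |⟨v, w⟩|_A ≤ |w|_M for every v ∈ M with ‖v‖_M ≤ 1, and (ii) if a ∈ A satisfies |⟨v, w⟩|_A ≤ a for every v ∈ M with ‖v‖_M ≤ 1, then |w|_M ≤ a. -/

import Mathlib

/-- A (right) Hilbert C*-module over a C*-algebra `A`: a right `A`-module `M` with an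
`A`-valued inner product, `A`-linear in the second variable, satisfying the listed axioms,
whose norm is `‖u‖ = ‖⟨u,u⟩‖^(1/2)` (so that completeness of `M` as a normed group is
completeness for this norm). -/
structure HilbertCStarModule (A : Type*) (M : Type*) [CStarAlgebra A] [PartialOrder A]
    [StarOrderedRing A] [NormedAddCommGroup M] where
  smul : M → A → M
  inner : M → M → A
  add_smul : ∀ (u v : M) (c : A), smul (u + v) c = smul u c + smul v c
  smul_add : ∀ (u : M) (c d : A), smul u (c + d) = smul u c + smul u d
  smul_mul : ∀ (u : M) (c d : A), smul u (c * d) = smul (smul u c) d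
  smul_one : ∀ u : M, smul u 1 = u
  inner_add_right : ∀ u v w : M, inner u (v + w) = inner u v + inner u w
  inner_smul_right : ∀ (u v : M) (c : A), inner u (smul v c) = inner u v * c
  star_inner : ∀ u v : M, star (inner u v) = inner v u
  inner_self_nonneg : ∀ u : M, 0 ≤ inner u u
  inner_self_eq_zero : ∀ u : M, inner u u = 0 → u = 0
  norm_eq : ∀ u : M, ‖u‖ = Real.sqrt ‖inner u u‖

/-!
The upper bound is Cauchy–Schwarz, `⟨v,w⟩* ⟨v,w⟩ ≤ ‖v‖² ⟨w,w⟩`, together with operator monotonicity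
of the square root. For leastness put `s = |w|`. Since `⟨w c, w c⟩ = (s c)* (s c)`, the vector
`w c` has norm `‖s c‖`, and `⟨w c, w⟩ = c* s²`. If `s` is invertible, `v = w s⁻¹` is in the unit
ball and attains `|⟨v,w⟩| = s`. In general `s` is replaced by `s + ε` in the inverse: then
`t = (s + ε)⁻¹` commutes with `s`, so `w t` is still in the unit ball, while `t s + ε t = 1` gives
`s ≤ t s² + ε = |⟨w t, w⟩| + ε`.
-/

theorem le_of_forall_pos_le_add_smul {E : Type*} [AddMonoid E] [Preorder E] [TopologicalSpace E]
    [ClosedIciTopology E] [ContinuousAdd E] [SMulWithZero ℝ E] [ContinuousSMul ℝ E] {a b e : E}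
    (h : ∀ ε : ℝ, 0 < ε → a ≤ b + ε • e) : a ≤ b := by
  have hcont : Continuous fun ε : ℝ ↦ b + ε • e := by fun_prop
  have hlim : Filter.Tendsto (fun ε : ℝ ↦ b + ε • e) (nhdsWithin 0 (Set.Ioi 0)) (nhds b) := by
    simpa using (hcont.tendsto 0).mono_left nhdsWithin_le_nhds
  exact ge_of_tendsto hlim (Filter.eventually_of_mem self_mem_nhdsWithin h)

section OrderedModule

variable {A : Type*} [Semiring A] [PartialOrder A] [IsOrderedAddMonoid A] [Module ℝ A]
  [PosSMulMono ℝ A] {s t : A} {ε : ℝ}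

theorem mul_le_one_of_mul_add_smul_eq_one (ht : 0 ≤ t) (hε : 0 ≤ ε) (h : t * s + ε • t = 1) :
    t * s ≤ 1 :=
  calc
    t * s ≤ t * s + ε • t := le_add_of_nonneg_right (smul_nonneg hε ht)
    _ = 1 := h

theorem le_mul_mul_self_add_smul_one [IsScalarTower ℝ A A] (ht : 0 ≤ t) (hε : 0 ≤ ε)
    (h : t * s + ε • t = 1) : s ≤ t * (s * s) + ε • 1 :=
  calc
    s = (t * s + ε • t) * s := by rw [h, one_mul]
    _ = t * (s * s) + ε • (t * s) := by rw [add_mul, mul_assoc, smul_mul_assoc]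
    _ ≤ t * (s * s) + ε • 1 := by
      gcongr
      exact mul_le_one_of_mul_add_smul_eq_one ht hε h

end OrderedModule

theorem exists_nonneg_commute_mul_add_smul_eq_one {A : Type*} [CStarAlgebra A] [PartialOrder A]
    [StarOrderedRing A] {s : A} (hs : 0 ≤ s) {ε : ℝ} (hε : 0 < ε) :
    ∃ t : A, 0 ≤ t ∧ Commute t s ∧ t * s + ε • t = 1 := by
  have hpos : IsStrictlyPositive (s + ε • 1) := (isStrictlyPositive_one.smul hε).nonneg_add hs
  have hcomm : Commute (s + ε • 1) s :=
    (Commute.refl s).add_left ((Commute.one_left s).smul_left ε)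
  obtain ⟨u, hu⟩ := hpos.isUnit
  rw [← hu] at hpos hcomm
  refine ⟨↑u⁻¹, CFC.inv_nonneg_of_nonneg u hpos.nonneg, hcomm.units_inv_left, ?_⟩
  simpa [hu, mul_add] using u.inv_mul

namespace HilbertCStarModule

variable {A M : Type*} [CStarAlgebra A] [PartialOrder A] [StarOrderedRing A]
  [NormedAddCommGroup M] (H : HilbertCStarModule A M)

/-- The `A`-valued absolute value `|u| = ⟨u,u⟩^(1/2)` of a vector `u` of a Hilbert C*-module. -/
protected noncomputable def abs (u : M) : A :=
  CFC.sqrt (H.inner u u)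

theorem abs_nonneg (u : M) : 0 ≤ H.abs u :=
  CFC.sqrt_nonneg _

theorem abs_mul_abs (u : M) : H.abs u * H.abs u = H.inner u u :=
  CFC.sqrt_mul_sqrt_self _ (H.inner_self_nonneg u)

theorem norm_sq_eq (u : M) : ‖u‖ ^ 2 = ‖H.inner u u‖ := by
  rw [H.norm_eq, Real.sq_sqrt (norm_nonneg _)]

theorem inner_add_left (u v w : M) : H.inner (u + v) w = H.inner u w + H.inner v w := by
  rw [← H.star_inner, H.inner_add_right, star_add, H.star_inner, H.star_inner]

theorem inner_smul_left (u v : M) (c : A) : H.inner (H.smul u c) v = star c * H.inner u v := by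
  rw [← H.star_inner, H.inner_smul_right, star_mul, H.star_inner]

theorem norm_smul (u : M) (c : A) : ‖H.smul u c‖ = ‖H.abs u * c‖ := by
  have hinner : H.inner (H.smul u c) (H.smul u c) = star (H.abs u * c) * (H.abs u * c) := by
    rw [H.inner_smul_right, H.inner_smul_left, ← H.abs_mul_abs, star_mul,
      (H.abs_nonneg u).star_eq]
    simp only [mul_assoc]
  rw [H.norm_eq, hinner, CStarRing.norm_star_mul_self, Real.sqrt_mul_self (norm_nonneg _)]

theorem inner_add_smul_self (u v : M) (c : A) :
    H.inner (u + H.smul v c) (u + H.smul v c) =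
      H.inner u u + H.inner u v * c + star c * H.inner v u + star c * H.inner v v * c := by
  simp only [H.inner_add_right, H.inner_add_left, H.inner_smul_right, H.inner_smul_left]
  abel

theorem star_inner_mul_inner_le (v w : M) :
    star (H.inner v w) * H.inner v w ≤ ‖v‖ ^ 2 • H.inner w w := by
  rcases eq_or_ne v 0 with rfl | hv
  · have hzero : H.inner 0 w = 0 := by simpa using H.inner_add_left 0 0 w
    simp [hzero]
  set c := H.inner v w
  set r := ‖v‖ ^ 2 with hr
  have hr₀ : 0 < r := by positivity
  have hconj : star c * H.inner v v * c ≤ r • (star c * c) := by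
    rw [hr, H.norm_sq_eq]
    exact CStarAlgebra.star_left_conjugate_le_norm_smul (.of_nonneg (H.inner_self_nonneg v))
  -- Complete the square with `v (c / r)`, the best approximation of `w` when `⟨v,v⟩ = r`.
  have hcomplete : r • H.inner w w - star c * c =
      r • H.inner (w + H.smul v (-(r⁻¹ • c))) (w + H.smul v (-(r⁻¹ • c))) +
        r⁻¹ • (r • (star c * c) - star c * H.inner v v * c) := by
    rw [H.inner_add_smul_self, ← H.star_inner v w]
    simp only [star_neg, star_smul, star_trivial, neg_mul, mul_neg, smul_mul_assoc, mul_smul_comm]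
    match_scalars <;> field_simp <;> norm_num
  rw [← sub_nonneg, hcomplete]
  exact add_nonneg (smul_nonneg hr₀.le (H.inner_self_nonneg _))
    (smul_nonneg (inv_nonneg.2 hr₀.le) (sub_nonneg.2 hconj))

theorem abs_inner_le (v w : M) : CFC.abs (H.inner v w) ≤ ‖v‖ • H.abs w :=
  calc
    CFC.abs (H.inner v w) ≤ CFC.sqrt (‖v‖ ^ 2 • H.inner w w) :=
      CFC.sqrt_le_sqrt _ _ (H.star_inner_mul_inner_le v w)
    _ = ‖v‖ • H.abs w :=
      CFC.sqrt_unique (by rw [smul_mul_smul_comm, H.abs_mul_abs, sq])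
        (smul_nonneg (norm_nonneg v) (H.abs_nonneg w))

theorem exists_norm_le_one_abs_le_abs_inner_add (w : M) {ε : ℝ} (hε : 0 < ε) :
    ∃ v : M, ‖v‖ ≤ 1 ∧ H.abs w ≤ CFC.abs (H.inner v w) + ε • 1 := by
  obtain ⟨t, ht, hcomm, hone⟩ :=
    exists_nonneg_commute_mul_add_smul_eq_one (H.abs_nonneg w) hε
  have hinner : H.inner (H.smul w t) w = t * (H.abs w * H.abs w) := by
    rw [H.inner_smul_left, ht.star_eq, H.abs_mul_abs]
  have hnonneg : 0 ≤ t * (H.abs w * H.abs w) :=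
    (hcomm.mul_right hcomm).mul_nonneg ht (H.abs_mul_abs w ▸ H.inner_self_nonneg w)
  refine ⟨H.smul w t, ?_, ?_⟩
  · rw [H.norm_smul, ← hcomm.eq,
      CStarAlgebra.norm_le_one_iff_of_nonneg _ (hcomm.mul_nonneg ht (H.abs_nonneg w))]
    exact mul_le_one_of_mul_add_smul_eq_one ht hε.le hone
  · rw [hinner, CFC.abs_of_nonneg _ hnonneg]
    exact le_mul_mul_self_add_smul_one ht hε.le hone

end HilbertCStarModule

theorem abs_eq_sup_unitBall_general {A M : Type*} [CStarAlgebra A] [PartialOrder A]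
    [StarOrderedRing A] [NormedAddCommGroup M] (H : HilbertCStarModule A M) (w : M) :
    IsLUB ((fun v ↦ CFC.abs (H.inner v w)) '' {v : M | ‖v‖ ≤ 1}) (H.abs w) := by
  constructor
  · rintro _ ⟨v, hv, rfl⟩
    exact (H.abs_inner_le v w).trans (smul_le_of_le_one_left (H.abs_nonneg w) hv)
  · intro a ha
    refine le_of_forall_pos_le_add_smul (e := 1) fun ε hε ↦ ?_
    obtain ⟨v, hv, hle⟩ := H.exists_norm_le_one_abs_le_abs_inner_add w hε
    exact hle.trans (add_le_add_left (ha ⟨v, hv, rfl⟩) _)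

/-- **The A-valued absolute value as a supremum over the unit ball.** Writing
`|c|_A = CFC.sqrt (star c * c)` for `c : A` and `|w|_M = CFC.sqrt ⟨w,w⟩` for `w : M`, the
element `|w|_M` is the supremum, in the order of `A`, of `{ |⟨v,w⟩|_A : ‖v‖ ≤ 1 }`:
it is an upper bound, and it is below every upper bound. -/
theorem abs_eq_sup_unitBall {A M : Type*} [CStarAlgebra A] [PartialOrder A]
    [StarOrderedRing A] [NormedAddCommGroup M] [CompleteSpace M]
    (H : HilbertCStarModule A M) (w : M) :
    (∀ v : M, ‖v‖ ≤ 1 →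
      CFC.sqrt (star (H.inner v w) * H.inner v w) ≤ CFC.sqrt (H.inner w w)) ∧
    (∀ a : A, (∀ v : M, ‖v‖ ≤ 1 →
        CFC.sqrt (star (H.inner v w) * H.inner v w) ≤ a) →
      CFC.sqrt (H.inner w w) ≤ a) :=
  let ⟨hub, hleast⟩ := abs_eq_sup_unitBall_general H w
  ⟨Set.forall_mem_image.1 hub, fun _ ha ↦ hleast (Set.forall_mem_image.2 ha)⟩
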